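/- (i) For every ε > 0 and every C ≥ 1, every locally finite metric space all of whose finite subsets admit C-bilipschitz embeddings into ℓ_1 admits a ((1+ε)·C)-bilipschitz embedding into ℓ_1; and (ii) there exists a locally finite metric space M whose finite subsets all admit isometric embeddings into ℓ_1 but which admits no isometric embedding into ℓ_1. -/

import Mathlib

open scoped ENNReal

/-- A metric space is locally finite if every closed ball of finite radius is finite. -/
def MetricLocallyFinite (A : Type*) [MetricSpace A] : Prop :=
  ∀ (x : A) (R : ℝ), (Metric.closedBall x R).Finite

/-- `f` is a `C`-bilipschitz embedding: there is `r > 0` with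
`r * d(u,v) ≤ d(f u, f v) ≤ r * C * d(u,v)` for all `u, v`. -/
def IsBilipschitzEmbedding {A Y : Type*} [MetricSpace A] [MetricSpace Y]
    (C : ℝ) (f : A → Y) : Prop :=
  ∃ r : ℝ, 0 < r ∧ ∀ u v : A,
    r * dist u v ≤ dist (f u) (f v) ∧ dist (f u) (f v) ≤ r * C * dist u v

abbrev EllOne := lp (fun _ : ℕ => ℝ) 1

lemma ell_summable (f : EllOne) : Summable fun i => |f i| := by
  have h := (memℓp_gen_iff (E := fun _ : ℕ => ℝ) (p := 1) (by simp) (f := (f : ℕ → ℝ))).1 f.2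
  simpa using h

lemma ell_norm (f : EllOne) : ‖f‖ = ∑' i, |f i| := by
  have h := lp.norm_eq_tsum_rpow (p := 1) (by simp) f
  simpa using h

lemma ell_dist (f g : EllOne) : dist f g = ∑' i, |f i - g i| := by
  rw [dist_eq_norm, ell_norm]; simp

lemma ell_sub_summable (f g : EllOne) : Summable fun i => |f i - g i| := by
  simpa using ell_summable (f - g)

lemma ell_mk (v : ℕ → ℝ) (h : Summable fun i => |v i|) : ∃ F : EllOne, ∀ i, F i = v i := by
  refine ⟨⟨v, (memℓp_gen_iff (E := fun _ : ℕ => ℝ) (p := 1) (by simp)).2 (by simpa using h)⟩, ?_⟩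
  intro i; rfl

lemma ell_glue {A : Type*} (G : A → ℕ → EllOne) (hG : ∀ x, ∃ N, ∀ i ≥ N, G x i = 0) :
    ∃ F : A → EllOne, ∀ x y N, (∀ i ≥ N, G x i = 0) → (∀ i ≥ N, G y i = 0) →
      dist (F x) (F y) = ∑ i ∈ Finset.range N, dist (G x i) (G y i) := by
  have key : ∀ H : ℕ → EllOne, (∃ N, ∀ i ≥ N, H i = 0) →
      Summable fun p : ℕ × ℕ => |H p.1 p.2| := by
    rintro H ⟨N, hN⟩
    rw [summable_prod_of_nonneg (by intro p; positivity)]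
    refine ⟨fun i => ell_summable (H i), ?_⟩
    apply summable_of_ne_finset_zero (s := Finset.range N)
    intro i hi
    have : H i = 0 := hN i (by simpa using hi)
    simp [this]
  have h1 : ∀ x, ∃ F : EllOne, ∀ k, F k = G x (Nat.unpair k).1 (Nat.unpair k).2 := by
    intro x
    apply ell_mk
    exact (Nat.pairEquiv.symm.summable_iff (f := fun p : ℕ × ℕ => |G x p.1 p.2|)).2 (key _ (hG x))
  choose F hF using h1
  refine ⟨F, fun x y N hx hy => ?_⟩
  rw [ell_dist]
  have hs := key (fun i => G x i - G y i) ⟨N, fun i hi => by simp [hx i hi, hy i hi]⟩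
  have e : ∑' k, |F x k - F y k| = ∑' p : ℕ × ℕ, |(G x p.1 - G y p.1) p.2| := by
    rw [← Nat.pairEquiv.symm.tsum_eq (fun p : ℕ × ℕ => |(G x p.1 - G y p.1) p.2|)]
    apply tsum_congr
    intro k
    rw [hF, hF]
    rfl
  rw [e, hs.tsum_prod, tsum_eq_sum (s := Finset.range N)]
  · apply Finset.sum_congr rfl
    intro i _
    rw [dist_eq_norm, ell_norm]
  · intro i hi
    have hi : N ≤ i := by simpa using hi
    simp [hx i hi, hy i hi]

noncomputable def hat (i : ℕ) (a : ℝ) : ℝ := max 0 (1 - |a - i|)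

lemma hat_nonneg (i : ℕ) (a : ℝ) : 0 ≤ hat i a := le_max_left _ _

lemma hat_lip1 (i : ℕ) (a b : ℝ) : |hat i a - hat i b| ≤ |a - b| := by
  unfold hat
  rw [abs_le]
  have h1 := abs_sub_abs_le_abs_sub (a - i) (b - i)
  have h2 := abs_sub_abs_le_abs_sub (b - i) (a - i)
  rw [sub_sub_sub_cancel_right] at h1 h2
  rw [abs_sub_comm b a] at h2
  have h3 := abs_nonneg (a - b)
  constructor
  · rcases max_cases 0 (1 - |a - i|) with h | h <;> rcases max_cases 0 (1 - |b - i|) with h' | h' <;>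
      linarith
  · rcases max_cases 0 (1 - |a - i|) with h | h <;> rcases max_cases 0 (1 - |b - i|) with h' | h' <;>
      linarith

lemma hat_zero (i : ℕ) (a : ℝ) (ha : 0 ≤ a) (h1 : i ≠ ⌊a⌋₊) (h2 : i ≠ ⌊a⌋₊ + 1) : hat i a = 0 := by
  unfold hat
  apply max_eq_left
  have hl := Nat.floor_le ha
  have hu := Nat.lt_floor_add_one a
  rcases lt_or_ge i ⌊a⌋₊ with h | h
  · have : (i : ℝ) + 1 ≤ ⌊a⌋₊ := by exact_mod_cast h
    have := le_abs_self (a - i)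
    linarith
  · have : ⌊a⌋₊ + 2 ≤ i := by omega
    have : (⌊a⌋₊ : ℝ) + 2 ≤ i := by exact_mod_cast this
    have := neg_abs_le (a - i)
    linarith

lemma hat_sum (a : ℝ) (ha : 0 ≤ a) (N : ℕ) (hN : a + 2 ≤ N) :
    ∑ i ∈ Finset.range N, hat i a = 1 := by
  have hl := Nat.floor_le ha
  have hu := Nat.lt_floor_add_one a
  have hk : ⌊a⌋₊ + 2 ≤ N := by
    have : (⌊a⌋₊ : ℝ) + 2 ≤ N := by linarith
    exact_mod_cast this
  have : ∑ i ∈ ({⌊a⌋₊, ⌊a⌋₊ + 1} : Finset ℕ), hat i a = ∑ i ∈ Finset.range N, hat i a := by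
    apply Finset.sum_subset
    · intro i hi
      simp at hi ⊢
      omega
    · intro i _ hi
      simp at hi
      exact hat_zero i a ha hi.1 hi.2
  rw [← this, Finset.sum_pair (by omega)]
  unfold hat
  push_cast
  rw [abs_of_nonneg (by linarith), abs_of_nonpos (by linarith), max_eq_right (by linarith),
    max_eq_right (by linarith)]
  ring

lemma hat_lip (a b : ℝ) (ha : 0 ≤ a) (hb : 0 ≤ b) (N : ℕ) :
    ∑ i ∈ Finset.range N, |hat i a - hat i b| ≤ 4 * |a - b| := by
  set T : Finset ℕ := {⌊a⌋₊, ⌊a⌋₊ + 1, ⌊b⌋₊, ⌊b⌋₊ + 1} with hT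
  have h1 : ∑ i ∈ Finset.range N, |hat i a - hat i b| ≤
      ∑ i ∈ Finset.range N ∪ T, |hat i a - hat i b| :=
    Finset.sum_le_sum_of_subset_of_nonneg Finset.subset_union_left (fun _ _ _ => abs_nonneg _)
  have h2 : ∑ i ∈ T, |hat i a - hat i b| = ∑ i ∈ Finset.range N ∪ T, |hat i a - hat i b| := by
    apply Finset.sum_subset Finset.subset_union_right
    intro i _ hi
    simp [hT] at hi
    rw [hat_zero i a ha hi.1 hi.2.1, hat_zero i b hb hi.2.2.1 hi.2.2.2]
    simp
  have h3 : ∑ i ∈ T, |hat i a - hat i b| ≤ T.card • |a - b| :=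
    Finset.sum_le_card_nsmul _ _ _ (fun i _ => hat_lip1 i a b)
  have h4 : T.card ≤ 4 := Finset.card_le_four
  have h5 : (T.card : ℝ) ≤ 4 := by exact_mod_cast h4
  rw [nsmul_eq_mul] at h3
  have := mul_le_mul_of_nonneg_right h5 (abs_nonneg (a - b))
  linarith

lemma log_slow (s t : ℝ) (hs : 0 ≤ s) (hst : s ≤ t) :
    s * |Real.log (1 + s) - Real.log (1 + t)| ≤ t - s := by
  have h1 : Real.log (1 + s) ≤ Real.log (1 + t) := Real.log_le_log (by linarith) (by linarith)
  rw [abs_of_nonpos (by linarith)]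
  have h2 := Real.log_le_sub_one_of_pos (x := (1 + t) / (1 + s))
    (div_pos (by linarith) (by linarith))
  have ht1 : (1 + t) ≠ 0 := by linarith
  rw [Real.log_div ht1 (by positivity)] at h2
  have h3 : (1 + t) / (1 + s) - 1 = (t - s) / (1 + s) := by field_simp; ring
  rw [h3, le_div_iff₀ (by positivity)] at h2
  nlinarith

/-- normalised embeddings of finite sets. -/
lemma normalise {A : Type*} [MetricSpace A] (C : ℝ) (S : Set A) (O : A)
    (hO : O ∈ S) (h : ∃ f : S → EllOne, IsBilipschitzEmbedding C f) (hC : 1 ≤ C) :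
    ∃ f : A → EllOne, (∀ x, ‖f x‖ ≤ C * dist x O) ∧ ∀ x ∈ S, ∀ y ∈ S,
      dist x y ≤ dist (f x) (f y) ∧ dist (f x) (f y) ≤ C * dist x y := by
  classical
  obtain ⟨f, r, hr, hf⟩ := h
  have hd : ∀ x y : S, dist (r⁻¹ • (f x - f ⟨O, hO⟩)) (r⁻¹ • (f y - f ⟨O, hO⟩)) =
      r⁻¹ * dist (f x) (f y) := by
    intro x y
    rw [dist_smul₀, dist_sub_right, Real.norm_of_nonneg (by positivity)]
  have hm : ∀ x y : S, dist x y ≤ r⁻¹ * dist (f x) (f y) ∧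
      r⁻¹ * dist (f x) (f y) ≤ C * dist x y := by
    intro x y
    obtain ⟨h1, h2⟩ := hf x y
    constructor
    · rw [inv_mul_eq_div, le_div_iff₀ hr]; linarith
    · rw [inv_mul_eq_div, div_le_iff₀ hr]; linarith
  refine ⟨fun x => if hx : x ∈ S then r⁻¹ • (f ⟨x, hx⟩ - f ⟨O, hO⟩) else 0, ?_, ?_⟩
  · intro x
    by_cases hx : x ∈ S
    · have := (hm ⟨x, hx⟩ ⟨O, hO⟩).2
      simp only [hx, dite_true]
      rw [norm_smul, Real.norm_of_nonneg (by positivity), ← dist_eq_norm]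
      exact this
    · simp only [hx, dite_false, norm_zero]
      positivity
  · intro x hx y hy
    simp only [hx, hy, dite_true]
    rw [hd]
    exact hm ⟨x, hx⟩ ⟨y, hy⟩

lemma part_one (ε C : ℝ) (hε : 0 < ε) (hC : 1 ≤ C) (A : Type*) [MetricSpace A]
    (hA : MetricLocallyFinite A)
    (hfin : ∀ S : Set A, S.Finite → ∃ f : S → EllOne, IsBilipschitzEmbedding C f) :
    ∃ f : A → EllOne, IsBilipschitzEmbedding ((1 + ε) * C) f := by
  rcases isEmpty_or_nonempty A with hE | ⟨⟨O⟩⟩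
  · exact ⟨fun _ => 0, 1, one_pos, fun u => hE.elim u⟩
  set η : ℝ := ε / (2 + ε) with hη
  have hη0 : 0 < η := by positivity
  have hη1 : η < 1 := by rw [hη, div_lt_one (by positivity)]; linarith
  set δ : ℝ := η / (4 * C) with hδ
  have hδ0 : 0 < δ := by positivity
  have hδC : 4 * δ * C = η := by rw [hδ]; field_simp
  have hR : ∀ i : ℕ, ∃ f : A → EllOne, (∀ x, ‖f x‖ ≤ C * dist x O) ∧
      ∀ x ∈ Metric.closedBall O (Real.exp ((i + 1) / δ)),
      ∀ y ∈ Metric.closedBall O (Real.exp ((i + 1) / δ)),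
      dist x y ≤ dist (f x) (f y) ∧ dist (f x) (f y) ≤ C * dist x y := by
    intro i
    exact normalise C _ O (by simp; positivity) (hfin _ (hA O _)) hC
  choose f hf0 hf using hR
  set g : A → ℝ := fun x => δ * Real.log (1 + dist x O) with hg
  have hg0 : ∀ x, 0 ≤ g x := fun x => by
    have : 0 ≤ Real.log (1 + dist x O) := Real.log_nonneg (by linarith [dist_nonneg (x := x) (y := O)])
    positivity
  have hbig : ∀ (x : A) (i : ℕ), g x + 2 ≤ i → hat i (g x) = 0 := by
    intro x i h
    have hl := Nat.floor_le (hg0 x)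
    apply hat_zero _ _ (hg0 x)
    · rintro rfl; linarith
    · intro h'; rw [h'] at h; push_cast at h; linarith
  have hball : ∀ (y : A) (i : ℕ), hat i (g y) ≠ 0 →
      dist y O ≤ Real.exp ((i + 1) / δ) := by
    intro y i h
    have h1 : g y < i + 1 := by
      by_contra hcon
      apply h
      unfold hat
      apply max_eq_left
      have := le_abs_self (g y - i)
      linarith
    have h2 : Real.log (1 + dist y O) ≤ (i + 1) / δ := by
      rw [le_div_iff₀ hδ0]; simp only [hg] at h1; linarith
    have h3 := (Real.log_le_iff_le_exp (by positivity)).1 h2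
    linarith
  obtain ⟨F, hF⟩ := ell_glue (fun x i => hat i (g x) • f i x) (by
    intro x
    obtain ⟨N, hN⟩ := exists_nat_ge (g x + 2)
    refine ⟨N, fun i hi => ?_⟩
    have : (N : ℝ) ≤ i := by exact_mod_cast hi
    rw [hbig x i (by linarith), zero_smul])
  have main : ∀ x y : A, dist x O ≤ dist y O →
      (1 - η) * dist x y ≤ dist (F x) (F y) ∧ dist (F x) (F y) ≤ (C + η) * dist x y := by
    intro x y hxy
    obtain ⟨N, hN⟩ := exists_nat_ge (g x + g y + 2)
    have hx := hg0 x
    have hy := hg0 y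
    have hD := hF x y N
      (fun i hi => by
        have : (N : ℝ) ≤ i := by exact_mod_cast hi
        beta_reduce
        rw [hbig x i (by linarith), zero_smul])
      (fun i hi => by
        have : (N : ℝ) ≤ i := by exact_mod_cast hi
        beta_reduce
        rw [hbig y i (by linarith), zero_smul])
    have hsum := hat_sum (g y) hy N (by linarith)
    have hlip := hat_lip (g x) (g y) hx hy N
    have hs : dist x O * |g x - g y| ≤ δ * dist x y := by
      have h1 := log_slow (dist x O) (dist y O) dist_nonneg hxy
      have h2 : dist y O - dist x O ≤ dist x y := by
        have := dist_triangle y x O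
        rw [dist_comm y x] at this
        linarith
      have h3 : |g x - g y| = δ * |Real.log (1 + dist x O) - Real.log (1 + dist y O)| := by
        simp only [hg]
        rw [← mul_sub, abs_mul, abs_of_pos hδ0]
      rw [h3]
      calc _ = δ * (dist x O * |Real.log (1 + dist x O) - Real.log (1 + dist y O)|) := by ring
        _ ≤ _ := mul_le_mul_of_nonneg_left (by linarith) hδ0.le
    have herr : (C * dist x O) * ∑ i ∈ Finset.range N, |hat i (g x) - hat i (g y)| ≤
        η * dist x y := by
      calc _ ≤ (C * dist x O) * (4 * |g x - g y|) :=
            mul_le_mul_of_nonneg_left hlip (by positivity)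
        _ = 4 * C * (dist x O * |g x - g y|) := by ring
        _ ≤ 4 * C * (δ * dist x y) := mul_le_mul_of_nonneg_left hs (by positivity)
        _ = η * dist x y := by rw [← hδC]; ring
    have term : ∀ i : ℕ,
        hat i (g y) * dist x y - (C * dist x O) * |hat i (g x) - hat i (g y)| ≤
          dist (hat i (g x) • f i x) (hat i (g y) • f i y) ∧
        dist (hat i (g x) • f i x) (hat i (g y) • f i y) ≤
          hat i (g y) * (C * dist x y) + (C * dist x O) * |hat i (g x) - hat i (g y)| := by
      intro i
      have e : hat i (g x) • f i x - hat i (g y) • f i y =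
          hat i (g y) • (f i x - f i y) + (hat i (g x) - hat i (g y)) • f i x := by
        module
      have n2 : ‖(hat i (g x) - hat i (g y)) • f i x‖ ≤
          (C * dist x O) * |hat i (g x) - hat i (g y)| := by
        rw [norm_smul, Real.norm_eq_abs, mul_comm]
        exact mul_le_mul_of_nonneg_right (hf0 i x) (abs_nonneg _)
      have n1 : ‖hat i (g y) • (f i x - f i y)‖ = hat i (g y) * dist (f i x) (f i y) := by
        rw [norm_smul, Real.norm_of_nonneg (hat_nonneg _ _), dist_eq_norm]
      have n3 : hat i (g y) * dist x y ≤ hat i (g y) * dist (f i x) (f i y) ∧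
          hat i (g y) * dist (f i x) (f i y) ≤ hat i (g y) * (C * dist x y) := by
        by_cases h0 : hat i (g y) = 0
        · simp [h0]
        · have hb := hball y i h0
          have := hf i x (by rw [Metric.mem_closedBall]; linarith) y
            (by rw [Metric.mem_closedBall]; linarith)
          exact ⟨mul_le_mul_of_nonneg_left this.1 (hat_nonneg _ _),
            mul_le_mul_of_nonneg_left this.2 (hat_nonneg _ _)⟩
      rw [dist_eq_norm, e]
      have t1 := norm_add_le (hat i (g y) • (f i x - f i y)) ((hat i (g x) - hat i (g y)) • f i x)
      have t2 := norm_sub_le_norm_add (hat i (g y) • (f i x - f i y))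
        ((hat i (g x) - hat i (g y)) • f i x)
      constructor <;> linarith [n3.1, n3.2]
    constructor
    · have := Finset.sum_le_sum (s := Finset.range N) (fun i _ => (term i).1)
      rw [← hD, Finset.sum_sub_distrib, ← Finset.sum_mul, ← Finset.mul_sum, hsum] at this
      linarith
    · have := Finset.sum_le_sum (s := Finset.range N) (fun i _ => (term i).2)
      rw [← hD, Finset.sum_add_distrib, ← Finset.sum_mul, ← Finset.mul_sum, hsum] at this
      linarith
  have main2 : ∀ x y : A,
      (1 - η) * dist x y ≤ dist (F x) (F y) ∧ dist (F x) (F y) ≤ (C + η) * dist x y := by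
    intro x y
    rcases le_total (dist x O) (dist y O) with h | h
    · exact main x y h
    · rw [dist_comm x y, dist_comm (F x)]; exact main y x h
  refine ⟨F, 1 - η, by linarith, fun u v => ⟨(main2 u v).1, (main2 u v).2.trans ?_⟩⟩
  apply mul_le_mul_of_nonneg_right _ dist_nonneg
  have e1 : (1 - η) * (1 + ε) = 1 + η := by rw [hη]; field_simp; ring
  have : (1 - η) * ((1 + ε) * C) = (1 + η) * C := by rw [← mul_assoc, e1]
  rw [this]
  nlinarith

/-- cut part of the distance -/
noncomputable def cutD (x y : ℕ × Fin 3) : ℝ :=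
  if x = y then 0 else if x.2 = y.2 then (if x.2 = 2 then 1 / 2 else 0)
  else if x.2 = 2 ∨ y.2 = 2 then 1 / 2 else 1

noncomputable def farD (x y : ℕ × Fin 3) : ℝ := if x.1 = y.1 then 0 else (x.1 : ℝ) + y.1

noncomputable def bigD (x y : ℕ × Fin 3) : ℝ := cutD x y + farD x y

def cutB {N : ℕ} (x : Fin N × Fin 3) (T : Fin N → Bool) : Bool :=
  if x.2 = 0 then false else if x.2 = 1 then true else T x.1

noncomputable def b2r (b : Bool) : ℝ := if b then 1 else 0

lemma half_sum {N : ℕ} (n : Fin N) (φ : (Fin N → Bool) → ℝ)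
    (h : ∀ T, φ T + φ (Function.update T n (!T n)) = 1) :
    ∑ T, φ T = 2 ^ N / 2 := by
  have inv : Function.Involutive (fun T : Fin N → Bool => Function.update T n (!T n)) := by
    intro T
    simp
  have e : ∑ T, φ (Function.update T n (!T n)) = ∑ T, φ T :=
    Equiv.sum_comp (inv.toPerm _) φ
  have : ∑ T : Fin N → Bool, (φ T + φ (Function.update T n (!T n))) = 2 ^ N := by
    simp [h]
  rw [Finset.sum_add_distrib, e] at this
  linarith

lemma cut_sum {N : ℕ} (x y : Fin N × Fin 3) :
    ∑ T : Fin N → Bool, |b2r (cutB x T) - b2r (cutB y T)| =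
      2 ^ N * cutD (x.1, x.2) (y.1, y.2) := by
  obtain ⟨n, k⟩ := x
  obtain ⟨m, l⟩ := y
  by_cases hnm : n = m
  · subst hnm
    fin_cases k <;> fin_cases l <;> simp [cutD, cutB, b2r] <;>
    · rw [half_sum n]
      · ring
      · intro T
        cases hT : T n <;> simp [hT]
  · have hmn : m ≠ n := fun h => hnm h.symm
    fin_cases k <;> fin_cases l <;> simp [cutD, cutB, b2r, hnm, Fin.val_inj] <;>
    first
    | · rw [half_sum n]
        · ring
        · intro T
          cases hT : T n <;> cases hT' : T m <;> simp [hT, hT', hmn]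
    | · rw [half_sum m]
        · ring
        · intro T
          cases hT : T n <;> cases hT' : T m <;> simp [hT, hT', hnm]

lemma far_sum {N : ℕ} (n m : Fin N) :
    ∑ i : Fin N, |(if i = n then (n : ℝ) else 0) - (if i = m then (m : ℝ) else 0)| =
      if (n : ℕ) = m then 0 else (n : ℝ) + m := by
  by_cases h : n = m
  · subst h; simp
  · have h' : (n : ℕ) ≠ m := fun h' => h (Fin.ext h')
    rw [if_neg h']
    have : ∀ i : Fin N, |(if i = n then (n : ℝ) else 0) - (if i = m then (m : ℝ) else 0)| =
        (if i = n then (n : ℝ) else 0) + (if i = m then (m : ℝ) else 0) := by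
      intro i
      by_cases h1 : i = n
      · have : i ≠ m := fun h2 => h (h1.symm.trans h2)
        simp [h, h1]
      · by_cases h2 : i = m
        · subst h2; simp [h1]
        · simp [h1, h2]
    simp [this, Finset.sum_add_distrib]

lemma fin_ell {ι : Type*} [Fintype ι] : ∃ J : (ι → ℝ) → EllOne,
    ∀ v w, dist (J v) (J w) = ∑ i, |v i - w i| := by
  classical
  let e := Fintype.equivFin ι
  let G : (ι → ℝ) → ℕ → ℝ := fun v k => if h : k < Fintype.card ι then v (e.symm ⟨k, h⟩) else 0
  have h0 : ∀ v, ∃ F : EllOne, ∀ k, F k = G v k := by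
    intro v
    apply ell_mk
    apply summable_of_ne_finset_zero (s := Finset.range (Fintype.card ι))
    intro k hk
    have : ¬ k < Fintype.card ι := by simpa using hk
    simp [G, this]
  choose J hJ using h0
  refine ⟨J, fun v w => ?_⟩
  rw [ell_dist, tsum_eq_sum (s := Finset.range (Fintype.card ι)), Finset.sum_range,
    ← e.sum_comp]
  · apply Finset.sum_congr rfl
    intro i _
    simp [hJ, G]
  · intro k hk
    have : ¬ k < Fintype.card ι := by simpa using hk
    simp [hJ, G, this]

lemma finite_embed (N : ℕ) : ∃ F : ℕ × Fin 3 → EllOne, ∀ x y : ℕ × Fin 3, x.1 < N → y.1 < N →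
    dist (F x) (F y) = bigD x y := by
  classical
  obtain ⟨J, hJ⟩ := fin_ell (ι := (Fin N → Bool) ⊕ Fin N)
  refine ⟨fun x => if h : x.1 < N then
    J (Sum.elim (fun T => (1 / 2 ^ N) * b2r (cutB (⟨x.1, h⟩, x.2) T))
      (fun i => if i = ⟨x.1, h⟩ then (x.1 : ℝ) else 0)) else 0, ?_⟩
  rintro ⟨n, k⟩ ⟨m, l⟩ hx hy
  have hx : n < N := hx
  have hy : m < N := hy
  simp only [hx, hy, dite_true]
  rw [hJ, Fintype.sum_sum_type]
  simp only [Sum.elim_inl, Sum.elim_inr]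
  have h2 := far_sum (⟨n, hx⟩ : Fin N) ⟨m, hy⟩
  simp only at h2
  rw [h2]
  unfold bigD farD
  congr 1
  have h3 := cut_sum ((⟨n, hx⟩, k) : Fin N × Fin 3) (⟨m, hy⟩, l)
  have : ∀ T : Fin N → Bool, |1 / 2 ^ N * b2r (cutB (⟨n, hx⟩, k) T) -
      1 / 2 ^ N * b2r (cutB (⟨m, hy⟩, l) T)| =
      1 / 2 ^ N * |b2r (cutB (⟨n, hx⟩, k) T) - b2r (cutB (⟨m, hy⟩, l) T)| := by
    intro T
    rw [← mul_sub, abs_mul, abs_of_pos (by positivity)]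
  simp only [this]
  rw [← Finset.mul_sum, h3]
  field_simp

lemma cutD_nonneg (x y : ℕ × Fin 3) : 0 ≤ cutD x y := by
  unfold cutD; split_ifs <;> norm_num

lemma farD_nonneg (x y : ℕ × Fin 3) : 0 ≤ farD x y := by
  unfold farD; split_ifs <;> positivity

lemma bigD_eq (x y : ℕ × Fin 3) (h : bigD x y = 0) : x = y := by
  have h1 := cutD_nonneg x y
  have h2 := farD_nonneg x y
  have h3 : cutD x y = 0 := by unfold bigD at h; linarith
  have h4 : farD x y = 0 := by unfold bigD at h; linarith
  have h5 : x.1 = y.1 := by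
    unfold farD at h4
    split_ifs at h4 with h5
    · exact h5
    · have : x.1 + y.1 = 0 := by exact_mod_cast h4
      omega
  by_contra hne
  have h6 : x.2 ≠ y.2 := fun h6 => hne (Prod.ext h5 h6)
  unfold cutD at h3
  rw [if_neg hne, if_neg h6] at h3
  split_ifs at h3 <;> norm_num at h3

lemma bigD_three (x y z : ℕ × Fin 3) : ∃ F : ℕ × Fin 3 → EllOne,
    dist (F x) (F y) = bigD x y ∧ dist (F y) (F x) = bigD y x ∧ dist (F y) (F z) = bigD y z ∧
    dist (F x) (F z) = bigD x z ∧ dist (F x) (F x) = bigD x x := by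
  obtain ⟨F, hF⟩ := finite_embed (x.1 + y.1 + z.1 + 1)
  have hx : x.1 < x.1 + y.1 + z.1 + 1 := by omega
  have hy : y.1 < x.1 + y.1 + z.1 + 1 := by omega
  have hz : z.1 < x.1 + y.1 + z.1 + 1 := by omega
  exact ⟨F, hF _ _ hx hy, hF _ _ hy hx, hF _ _ hy hz, hF _ _ hx hz, hF _ _ hx hx⟩

def BadM : Type := ℕ × Fin 3

noncomputable instance : MetricSpace BadM where
  dist x y := bigD x y
  dist_self x := by
    obtain ⟨F, h1, h2, h3, h4, h5⟩ := bigD_three x x x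
    rw [← h5, dist_self]
  dist_comm x y := by
    obtain ⟨F, h1, h2, h3, h4, h5⟩ := bigD_three x y x
    rw [← h1, ← h2, dist_comm]
  dist_triangle x y z := by
    obtain ⟨F, h1, h2, h3, h4, h5⟩ := bigD_three x y z
    rw [← h1, ← h3, ← h4]
    exact dist_triangle _ _ _
  eq_of_dist_eq_zero {x y} h := bigD_eq x y h

lemma bad_dist (x y : BadM) : dist x y = bigD x y := rfl

lemma bad_lf : MetricLocallyFinite BadM := by
  intro x R
  obtain ⟨K, hK⟩ := exists_nat_gt R
  have : Set.Finite {y : ℕ × Fin 3 | y.1 ≤ K + x.1} := by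
    apply ((Set.finite_Iic (K + x.1)).prod (Set.finite_univ (α := Fin 3))).subset
    intro y hy
    simpa using hy
  refine Set.Finite.subset (α := BadM) this ?_
  intro (y : BadM) hy
  rw [Metric.mem_closedBall, bad_dist] at hy
  have hy' := cutD_nonneg y x
  unfold bigD farD at hy
  change y.1 ≤ K + x.1
  split_ifs at hy with h
  · rw [h]; omega
  · have : (y.1 : ℝ) < K := by
      have : (0 : ℝ) ≤ x.1 := by positivity
      linarith
    have : y.1 < K := by exact_mod_cast this
    omega

lemma bad_fin (S : Set BadM) (hS : S.Finite) : ∃ f : S → EllOne, Isometry f := by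
  obtain ⟨K, hK⟩ := (hS.image (fun x : BadM => x.1)).bddAbove
  obtain ⟨F, hF⟩ := finite_embed (K + 1)
  refine ⟨fun x => F x.1, Isometry.of_dist_eq ?_⟩
  intro x y
  exact hF x.1 y.1 (Nat.lt_succ_of_le (hK ⟨x.1, x.2, rfl⟩))
    (Nat.lt_succ_of_le (hK ⟨y.1, y.2, rfl⟩))

lemma ell_between (x y z : EllOne) (h : dist x z = dist x y + dist y z) (i : ℕ) :
    |x i - z i| = |x i - y i| + |y i - z i| := by
  rw [ell_dist, ell_dist, ell_dist, ← (ell_sub_summable x y).tsum_add (ell_sub_summable y z)] at h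
  by_contra hne
  have hle : ∀ j, |x j - z j| ≤ |x j - y j| + |y j - z j| := fun j => abs_sub_le _ _ _
  have := Summable.tsum_lt_tsum (i := i) hle (lt_of_le_of_ne (hle i) hne) (ell_sub_summable x z)
    ((ell_sub_summable x y).add (ell_sub_summable y z))
  linarith

lemma real_rigid (a p q q' h : ℝ) (h1 : |a - q'| = |a - p| + |p - q'|)
    (h2 : |a - q'| = |a - q| + |q - q'|) (h3 : |p - q| = |p - a| + |a - q|)
    (h4 : |p - q| = |p - q'| + |q' - q|) (h5 : |q - q'| = |q - h| + |h - q'|) :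
    |h - q| ≤ |p - a| ∧ (p = a → h = q) ∧ (p ≠ a → q = a) := by
  have hq : q' - q = p - a ∧ (p ≠ a → q = a) := by
    constructor <;> grind [abs_cases]
  refine ⟨?_, ?_, hq.2⟩
  · have := abs_nonneg (h - q')
    rw [← hq.1, abs_sub_comm q' q, h5, abs_sub_comm h q]
    linarith
  · intro hpa
    have : q' = q := by linarith [hq.1]
    rw [this] at h5
    grind [abs_cases]

lemma bad_no (f : BadM → EllOne) (hf : Isometry f) : False := by
  have hd : ∀ x y : BadM, dist (f x) (f y) = bigD x y := fun x y => by rw [hf.dist_eq]; rfl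
  set P : ℕ → Fin 3 → EllOne := fun n k => f ((n, k) : ℕ × Fin 3) with hP
  have hD : ∀ n k m l, dist (P n k) (P m l) = bigD (n, k) (m, l) := fun n k m l => hd _ _
  have hrig : ∀ n i, 1 ≤ n →
      |P n 2 i - P n 0 i| ≤ |P 0 1 i - P 0 0 i| ∧ (P 0 1 i = P 0 0 i → P n 2 i = P n 0 i) ∧
      (P 0 1 i ≠ P 0 0 i → P n 0 i = P 0 0 i) := by
    intro n i hn
    have hn0 : n ≠ 0 := by omega
    have hn0' : 0 ≠ n := by omega
    apply real_rigid (q' := P n 1 i)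
    all_goals
      apply ell_between
      simp only [hD]
      simp [bigD, cutD, farD, hn0, hn0']
      try ring
      try norm_num
  set g : ℕ → ℕ → ℝ := fun n i => P (n + 1) 2 i - P (n + 1) 0 i with hg
  have hu := ell_sub_summable (P 0 1) (P 0 0)
  have hgs : ∀ n m, n ≠ m → ∑' i, |g n i - g m i| = 1 / 2 := by
    intro n m hnm
    have e : ∀ i, |g n i - g m i| = |P (n+1) 2 i - P (m+1) 2 i| - |P (n+1) 0 i - P (m+1) 0 i| := by
      intro i
      obtain ⟨_, a1, b1⟩ := hrig (n+1) i (by omega)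
      obtain ⟨_, a2, b2⟩ := hrig (m+1) i (by omega)
      simp only [hg]
      by_cases h : P 0 1 i = P 0 0 i
      · rw [a1 h, a2 h]; simp
      · rw [b1 h, b2 h]; simp
    simp only [e]
    rw [(ell_sub_summable _ _).tsum_sub (ell_sub_summable _ _), ← ell_dist, ← ell_dist, hD, hD]
    simp [bigD, cutD, farD, hnm]
  have hcpt : IsCompact (Set.pi Set.univ
      (fun i : ℕ => Set.Icc (-|P 0 1 i - P 0 0 i|) (|P 0 1 i - P 0 0 i|))) :=
    isCompact_univ_pi (fun i => isCompact_Icc)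
  have hmem : ∀ n, g n ∈ (Set.pi Set.univ
      (fun i : ℕ => Set.Icc (-|P 0 1 i - P 0 0 i|) (|P 0 1 i - P 0 0 i|))) := by
    intro n i _
    exact abs_le.1 (hrig (n+1) i (by omega)).1
  obtain ⟨l, _, φ, hφ, hl⟩ := hcpt.tendsto_subseq hmem
  have hl' : ∀ i, Filter.Tendsto (fun n => g (φ n) i) Filter.atTop (nhds (l i)) := by
    intro i
    exact (tendsto_pi_nhds.1 hl) i
  have lim : Filter.Tendsto (fun n => ∑' i, |g (φ n) i - g (φ (n+1)) i|) Filter.atTop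
      (nhds (∑' _ : ℕ, (0 : ℝ))) := by
    apply tendsto_tsum_of_dominated_convergence (hu.mul_left 2)
    · intro i
      have h1 := (hl' i).sub ((hl' i).comp (Filter.tendsto_add_atTop_nat 1))
      simpa using h1.abs
    · refine Filter.Eventually.of_forall (fun n i => ?_)
      rw [Real.norm_eq_abs, abs_abs]
      have h1 := (hrig (φ n + 1) i (by omega)).1
      have h2 := (hrig (φ (n+1) + 1) i (by omega)).1
      have h3 := abs_sub (g (φ n) i) (g (φ (n+1)) i)
      simp only [hg] at h3 ⊢
      linarith
  have hc : ∀ n, ∑' i, |g (φ n) i - g (φ (n+1)) i| = 1 / 2 :=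
    fun n => hgs _ _ (hφ (Nat.lt_succ_self n)).ne
  simp only [hc, tsum_zero] at lim
  have := tendsto_nhds_unique lim tendsto_const_nhds
  norm_num at this

theorem ell1_D_eq_one_plus :
    (∀ (ε C : ℝ), 0 < ε → 1 ≤ C →
      ∀ (A : Type*) [MetricSpace A], MetricLocallyFinite A →
        (∀ S : Set A, S.Finite →
          ∃ f : S → lp (fun _ : ℕ => ℝ) 1, IsBilipschitzEmbedding C f) →
        ∃ f : A → lp (fun _ : ℕ => ℝ) 1, IsBilipschitzEmbedding ((1 + ε) * C) f) ∧
    (∃ (M : Type) (_ : MetricSpace M), MetricLocallyFinite M ∧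
      (∀ S : Set M, S.Finite → ∃ f : S → lp (fun _ : ℕ => ℝ) 1, Isometry f) ∧
      ¬ ∃ f : M → lp (fun _ : ℕ => ℝ) 1, Isometry f) := by
  exact ⟨fun ε C hε hC A _ hA h => part_one ε C hε hC A hA h,
    BadM, inferInstance, bad_lf, bad_fin, fun ⟨f, hf⟩ => bad_no f hf⟩
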